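/- arXiv:2307.07031 — 2 statements merged into one kernel-verified Lean document; each statement's English description precedes it below -/
import Mathlib

section
/- Let R be a ring equipped with a bivariant Sylvester module rank function dim_R, and let M be a left R-module which is the union of a directed family (M_i)_{i ∈ I} of R-submodules (directed by inclusion). Then dim_R(M) ≤ sup_{i ∈ I} dim_R(M_i). -/
/-!
Every finitely generated `q ⊆ M` lies in some `Mᵢ` by directedness. Enlarging the ambient module
can only decrease `dim (q | ·)`, since the infimum over finitely generated intermediate modules
runs over a larger set (`BSMRF.dim_le_dim_comap`); hence
`dim (q | M) ≤ dim (q | Mᵢ) ≤ dim Mᵢ`, the last step by additivity. Taking the supremum over `q`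
gives the bound on `dim M`.
-/

open scoped ENNReal

/-- A bivariant Sylvester module rank function on a ring `R`:
it assigns to every pair `M₁ ⊆ M₂` of left `R`-modules (encoded as a module `M₂`
together with a submodule `M₁` of it) a value in `[0,∞]`. -/
structure BSMRF (R : Type) [Ring R] where
  /-- the value `dim (M₁ | M₂)` on a pair `M₁ ⊆ M₂`. -/
  dim : ∀ (M : Type) [AddCommGroup M] [Module R M], Submodule R M → ℝ≥0∞
  /-- isomorphism invariance -/
  dim_congr : ∀ (M : Type) [AddCommGroup M] [Module R M] (N : Type) [AddCommGroup N]
      [Module R N] (e : M ≃ₗ[R] N) (p : Submodule R M),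
      dim M p = dim N (p.map (e : M →ₗ[R] N))
  /-- normalization: the zero module has dimension `0` -/
  dim_punit : dim PUnit ⊤ = 0
  /-- normalization: the ring itself has dimension `1` -/
  dim_self : dim R ⊤ = 1
  /-- additivity with respect to direct sums of pairs -/
  dim_prod : ∀ (M : Type) [AddCommGroup M] [Module R M] (N : Type) [AddCommGroup N]
      [Module R N] (p : Submodule R M) (q : Submodule R N),
      dim (M × N) (p.prod q) = dim M p + dim N q
  /-- continuity: `dim (M₁ | M₂)` is the sup over finitely generated submodules of `M₁` -/
  dim_sup : ∀ (M : Type) [AddCommGroup M] [Module R M] (p : Submodule R M),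
      dim M p = ⨆ (q : Submodule R M) (_ : q ≤ p) (_ : q.FG), dim M q
  /-- continuity: for finitely generated `M₁`, `dim (M₁ | M₂)` is the inf over finitely
  generated intermediate submodules `M₁ ⊆ M₂' ⊆ M₂` of `dim (M₁ | M₂')` -/
  dim_inf : ∀ (M : Type) [AddCommGroup M] [Module R M] (p : Submodule R M), p.FG →
      dim M p = ⨅ (q : Submodule R M) (_ : p ≤ q) (_ : q.FG), dim q (p.comap q.subtype)
  /-- additivity -/
  dim_additive : ∀ (M : Type) [AddCommGroup M] [Module R M] (p : Submodule R M),
      dim M ⊤ = dim M p + dim (M ⧸ p) ⊤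

variable {R : Type} [Ring R]

/-- The dimension of a module `M`, namely `dim (M | M)`. -/
def BSMRF.dimM (d : BSMRF R) (M : Type) [AddCommGroup M] [Module R M] : ℝ≥0∞ :=
  d.dim M ⊤

/-- A bivariant Sylvester module rank function is exact if `dim (M₁ | M₂) = dim M₁`
for every pair `M₁ ⊆ M₂`. -/
def BSMRF.Exact (d : BSMRF R) : Prop :=
  ∀ (M : Type) [AddCommGroup M] [Module R M] (p : Submodule R M), d.dim M p = d.dimM p

/-- An `R`-linear map is a `dim`-isomorphism if its kernel and cokernel have
dimension zero. -/
def BSMRF.IsDimIso (d : BSMRF R) {M N : Type} [AddCommGroup M] [Module R M]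
    [AddCommGroup N] [Module R N] (f : M →ₗ[R] N) : Prop :=
  d.dimM (LinearMap.ker f) = 0 ∧ d.dimM (N ⧸ LinearMap.range f) = 0

/-- For finitely generated `q ⊆ N ⊆ M`, one has `dim (q | M) ≤ dim (q | N)`. -/
theorem BSMRF.dim_le_dim_comap (d : BSMRF R) (M : Type) [AddCommGroup M] [Module R M]
    (q N : Submodule R M) (hq : q.FG) (hqN : q ≤ N) :
    d.dim M q ≤ d.dim N (q.comap N.subtype) := by
  have hfg : (q.comap N.subtype).FG := by
    apply Submodule.fg_of_fg_map_injective N.subtype N.subtype_injective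
    rwa [Submodule.map_comap_eq, Submodule.range_subtype, inf_eq_right.mpr hqN]
  rw [d.dim_inf N _ hfg]
  refine le_iInf fun r => le_iInf fun hr => le_iInf fun hrfg => ?_
  -- A finitely generated `r` with `q ⊆ r ⊆ N` is also admissible in the infimum over `M`.
  have hqr : q ≤ r.map N.subtype := fun x hx => ⟨⟨x, hqN hx⟩, hr hx, rfl⟩
  rw [d.dim_inf M q hq]
  refine (iInf₂_le_of_le (r.map N.subtype) hqr (iInf_le _ (hrfg.map _))).trans (le_of_eq ?_)
  rw [d.dim_congr r _ (Submodule.equivMapOfInjective N.subtype N.subtype_injective r)]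
  congr 1
  ext x
  constructor
  · intro hx
    obtain ⟨y, hy⟩ :=
      (Submodule.equivMapOfInjective N.subtype N.subtype_injective r).surjective x
    subst hy
    exact ⟨y, hx, rfl⟩
  · rintro ⟨y, hy, rfl⟩
    exact hy

/-- If a left `R`-module `M` is the union of a directed family of
submodules `(Mᵢ)`, then `dim_R M ≤ ⨆ i, dim_R Mᵢ`. -/
theorem dim_le_iSup_of_directed_union (d : BSMRF R)
    (M : Type) [AddCommGroup M] [Module R M] {ι : Type} (p : ι → Submodule R M)
    (hdir : Directed (· ≤ ·) p) (hunion : (⋃ i, (p i : Set M)) = Set.univ) :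
    d.dimM M ≤ ⨆ i, d.dimM (p i) := by
  have hne : Nonempty ι := by
    have h0 : (0 : M) ∈ ⋃ i, (p i : Set M) := hunion ▸ Set.mem_univ _
    obtain ⟨i, -⟩ := Set.mem_iUnion.mp h0
    exact ⟨i⟩
  have htop : (⨆ i, p i) = ⊤ := by
    rw [← SetLike.coe_set_eq, Submodule.coe_iSup_of_directed p hdir, hunion, Submodule.top_coe]
  unfold BSMRF.dimM
  rw [d.dim_sup M ⊤]
  refine iSup_le fun q => iSup_le fun _ => iSup_le fun hq => ?_
  -- Finitely generated submodules are compact elements of the lattice of submodules.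
  obtain ⟨_, ⟨i, rfl⟩, hi⟩ := (Submodule.fg_iff_compact q).mp hq (Set.range p) (⨆ i, p i)
    (Set.range_nonempty p) hdir.directedOn_range isLUB_iSup (htop ▸ le_top)
  calc d.dim M q ≤ d.dim (p i) (q.comap (p i).subtype) := d.dim_le_dim_comap M q (p i) hq hi
    _ ≤ d.dim (p i) ⊤ := by
      rw [d.dim_additive (p i) (q.comap (p i).subtype)]
      exact le_self_add
    _ ≤ ⨆ i, d.dim (p i) ⊤ := le_iSup (fun i => d.dim (p i) ⊤) i
end

section
/- Let G be a countable group and H a subgroup of G of infinite index (i.e., the coset space G/H is infinite). Let X = ∏_{gH ∈ G/H} [0,1] be the space of functions from G/H to [0,1], equipped with the product measure μ of the Lebesgue measure on each factor (a probability measure), and let G act on X by permuting coordinates via left multiplication on cosets: (g · x)(kH) = x(g⁻¹kH). Then this measure-preserving action is ergodic: every measurable subset A ⊆ X satisfying g · A = A for all g ∈ G has μ(A) = 0 or μ(A) = 1. -/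
/-!
Ergodicity follows from asymptotic independence of translates. By a lemma of
B. H. Neumann, a group is never a finite union of cosets of infinite-index subgroups; since the elements
moving `s` to `t` form a coset of the stabilizer of `s`, any finite set `S` of points in a
transitive action on an infinite set has a translate disjoint from it
(`exists_smul_disjoint_finset`).

Given an invariant set `A` and `ε > 0`, pick a cylinder `C` over a finite set `S` of coordinates
with `μ (C ∆ A) < ε`, and `g` with `g⁻¹` moving `S` off itself. The preimage of `C` under the
shift by `g` is independent of `C` (`exists_preimage_indep`), has the same measure, and is
also `ε`-close to `A`. Hence `μ A` is within `4 ε` of `(μ A) ^ 2` for every `ε > 0`, which forces `μ A ∈ {0, 1}`.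
-/

open MeasureTheory
open scoped symmDiff Pointwise

/-- In a transitive action on an infinite set, every finite set has a disjoint translate: otherwise
`G` would be a finite union of cosets of point stabilizers, which have infinite index. -/
theorem exists_smul_disjoint_finset {G α : Type*} [Group G] [MulAction G α]
    [MulAction.IsPretransitive G α] [Infinite α] (S : Finset α) :
    ∃ g : G, ∀ s ∈ S, g • s ∉ S := by
  by_contra! hcon
  choose k hk using fun p : α × α => MulAction.exists_smul_eq G p.1 p.2
  have hcov : ⋃ p ∈ S ×ˢ S, k p • (MulAction.stabilizer G p.1 : Set G) = Set.univ := by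
    refine Set.eq_univ_of_forall fun g => ?_
    obtain ⟨s, hs, hgs⟩ := hcon g
    simp only [Set.mem_iUnion]
    refine ⟨(s, g • s), Finset.mk_mem_product hs hgs, ?_⟩
    rw [mem_leftCoset_iff, SetLike.mem_coe, MulAction.mem_stabilizer_iff, mul_smul,
      inv_smul_eq_iff]
    exact (hk (s, g • s)).symm
  obtain ⟨p, -, hp⟩ := Subgroup.exists_finiteIndex_of_leftCoset_cover hcov
  refine hp.index_ne_zero ?_
  rw [MulAction.index_stabilizer_of_transitive, Nat.card_eq_zero_of_infinite]

/-- Cylinders have independent translates: if `g⁻¹` moves `S` off itself, a cylinder `C`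
over `S` and its preimage under the shift by `g` depend on disjoint sets of coordinates. -/
theorem exists_preimage_indep {G α E : Type*} [Group G] [MulAction G α]
    [MulAction.IsPretransitive G α] [Infinite α] [MeasurableSpace E]
    (ν : Measure E) [IsProbabilityMeasure ν]
    {C : Set (α → E)} (hC : C ∈ measurableCylinders fun _ : α => E) :
    ∃ g : G, Measure.infinitePi (fun _ : α => ν)
        (C ∩ (fun (x : α → E) (c : α) => x (g⁻¹ • c)) ⁻¹' C) =
      Measure.infinitePi (fun _ : α => ν) C *
        Measure.infinitePi (fun _ : α => ν)
          ((fun (x : α → E) (c : α) => x (g⁻¹ • c)) ⁻¹' C) := by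
  classical
  obtain ⟨S, B, hB, rfl⟩ := (mem_measurableCylinders C).1 hC
  obtain ⟨g, hg⟩ := exists_smul_disjoint_finset (G := G) S
  refine ⟨g⁻¹, ?_⟩
  simp only [inv_inv]
  set T : Finset α := S.image (g • ·) with hT
  have hdisj : Disjoint S T := by
    rw [Finset.disjoint_right]
    intro t ht
    obtain ⟨s, hs, rfl⟩ := Finset.mem_image.1 ht
    exact hg s hs
  have hind := ProbabilityTheory.iIndepFun.indepFun_finset S T hdisj
    (ProbabilityTheory.iIndepFun_infinitePi (P := fun _ : α => ν) (X := fun _ ω => ω)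
      fun _ => measurable_id) fun i => measurable_pi_apply i
  -- `φ` reads the coordinates in `g • S` as a configuration on `S`.
  let φ : (T → E) → (S → E) := fun y i => y ⟨g • i.1, Finset.mem_image_of_mem _ i.2⟩
  have hφ : Measurable φ := measurable_pi_lambda _ fun i => measurable_pi_apply _
  exact hind.measure_inter_preimage_eq_mul B (φ ⁻¹' B) hB (hφ hB)

/-- Let `G` be a countable group and `H` a subgroup of infinite index.
Let `X = ∏_{gH ∈ G/H} [0,1]` carry the product `μ` of Lebesgue measure on each factor
(characterized on measurable cylinder sets), and let `G` act on `X` by permuting the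
coordinates via left multiplication on the cosets, `(g · x)(kH) = x(g⁻¹kH)`.  Then this
measure-preserving action is ergodic: every measurable `G`-invariant subset `A ⊆ X` has
`μ A = 0` or `μ A = 1`. -/
theorem bernoulli_coset_action_ergodic
    (G : Type) [Group G] [Countable G] (H : Subgroup G) (hH : Infinite (G ⧸ H))
    (μ : Measure ((G ⧸ H) → unitInterval)) [IsProbabilityMeasure μ]
    -- `μ` is the product over `G/H` of the Lebesgue measure on `[0,1]`
    (hμ : ∀ (s : Finset (G ⧸ H)) (f : (G ⧸ H) → Set unitInterval),
      (∀ c, MeasurableSet (f c)) →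
        μ {x | ∀ c ∈ s, x c ∈ f c} = ∏ c ∈ s, volume (f c))
    -- `A` is a measurable subset invariant under the `G`-action `(g • x) c = x (g⁻¹ • c)`
    (A : Set ((G ⧸ H) → unitInterval)) (hA : MeasurableSet A)
    (hinv : ∀ g : G,
      (fun (x : (G ⧸ H) → unitInterval) (c : G ⧸ H) => x (g⁻¹ • c)) ⁻¹' A = A) :
    μ A = 0 ∨ μ A = 1 := by
  have hμeq : μ = Measure.infinitePi fun _ : G ⧸ H => (volume : Measure unitInterval) :=
    Measure.eq_infinitePi _ fun s t ht => hμ s t ht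
  have hT : ∀ g : G, MeasurePreserving
      (fun (x : (G ⧸ H) → unitInterval) (c : G ⧸ H) => x (g⁻¹ • c)) μ μ := fun g => by
    refine ⟨by fun_prop, ?_⟩
    rw [hμeq]
    exact Measure.map_infinitePi_infinitePi_of_inj (MulAction.injective g⁻¹)
  have key : ∀ ε : ℝ, 0 < ε → |μ.real A - μ.real A ^ 2| ≤ 4 * ε := by
    intro ε hε
    obtain ⟨C, hC, hCA⟩ := exists_measure_symmDiff_lt_of_generateFrom_isSetRing (μ := μ)
      (isSetRing_measurableCylinders (α := fun _ : G ⧸ H => unitInterval))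
      ⟨{Set.univ}, Set.countable_singleton _,
        Set.singleton_subset_iff.2 (univ_mem_measurableCylinders _), by simp⟩
      generateFrom_measurableCylinders.symm hA (ENNReal.ofReal_pos.2 hε)
    have hCm : MeasurableSet C := .of_mem_measurableCylinders hC
    obtain ⟨g, hg⟩ := exists_preimage_indep (G := G) (volume : Measure unitInterval) hC
    rw [← hμeq] at hg
    set T := fun (x : (G ⧸ H) → unitInterval) (c : G ⧸ H) => x (g⁻¹ • c)
    have hTC : μ (T ⁻¹' C) = μ C := (hT g).measure_preimage hCm.nullMeasurableSet
    have hTCm : MeasurableSet (T ⁻¹' C) := (hT g).measurable hCm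
    have hCA' : μ.real (C ∆ A) ≤ ε := ENNReal.toReal_le_of_le_ofReal hε.le hCA.le
    have hTCA : μ.real ((T ⁻¹' C) ∆ A) ≤ ε := by
      -- By invariance of `A`, this symmetric difference is the preimage of `C ∆ A`.
      have h1 : (T ⁻¹' C) ∆ A = T ⁻¹' (C ∆ A) := by
        rw [Set.preimage_symmDiff, hinv g]
      rw [h1, measureReal_def, (hT g).measure_preimage (hCm.symmDiff hA).nullMeasurableSet]
      exact hCA'
    have hsub : (C ∩ T ⁻¹' C) ∆ A ⊆ C ∆ A ∪ (T ⁻¹' C) ∆ A := by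
      intro x
      simp only [Set.mem_symmDiff, Set.mem_inter_iff, Set.mem_union]
      tauto
    have hinter : |μ.real (C ∩ T ⁻¹' C) - μ.real A| ≤ 2 * ε :=
      calc _ ≤ μ.real ((C ∩ T ⁻¹' C) ∆ A) := abs_measureReal_sub_le_measureReal_symmDiff
              (hCm.inter hTCm).nullMeasurableSet hA.nullMeasurableSet
        _ ≤ μ.real (C ∆ A ∪ (T ⁻¹' C) ∆ A) := measureReal_mono hsub
        _ ≤ μ.real (C ∆ A) + μ.real ((T ⁻¹' C) ∆ A) := measureReal_union_le _ _
        _ ≤ 2 * ε := by linarith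
    have hprod : μ.real (C ∩ T ⁻¹' C) = μ.real C ^ 2 := by
      rw [measureReal_def, hg, hTC, ENNReal.toReal_mul, sq, measureReal_def]
    have hd : |μ.real C - μ.real A| ≤ ε := (abs_measureReal_sub_le_measureReal_symmDiff
      hCm.nullMeasurableSet hA.nullMeasurableSet).trans hCA'
    have hsq : |μ.real C ^ 2 - μ.real A ^ 2| ≤ 2 * ε := by
      have hsum : |μ.real C + μ.real A| ≤ 2 := by
        rw [abs_of_nonneg (by positivity)]
        linarith [measureReal_le_one (μ := μ) (s := C), measureReal_le_one (μ := μ) (s := A)]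
      rw [sq_sub_sq, abs_mul]
      exact mul_le_mul hsum hd (abs_nonneg _) zero_le_two
    rw [hprod] at hinter
    rw [abs_le] at *
    constructor <;> linarith
  have hzero : μ.real A - μ.real A ^ 2 = 0 := by
    rw [← abs_nonpos_iff]
    refine le_of_forall_pos_le_add fun δ hδ => ?_
    linarith [key (δ / 4) (by linarith)]
  have hfac : μ.real A * (1 - μ.real A) = 0 := by linarith
  rcases mul_eq_zero.1 hfac with h | h
  · exact Or.inl ((measureReal_eq_zero_iff).1 h)
  · refine Or.inr ((ENNReal.toReal_eq_one_iff _).1 ?_)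
    rw [← measureReal_def]
    linarith
end
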